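/- arXiv:2505.23459 — 2 statements merged into one kernel-verified Lean document; each statement's English description precedes it below -/
import Mathlib

section
/- Let S and A be nonempty finite sets and, for θ ∈ ℝ^{S×A}, let H(π_θ) ∈ ℝ^S be the vector of per-state entropies H(π_θ)(s) = −Σ_{a∈A} π_θ(a|s)·log π_θ(a|s). Then for all θ, u, v, w ∈ ℝ^{S×A}: (i) ‖dH(π_θ)[u]‖_∞ ≤ 2·log|A|·‖u‖_∞; (ii) ‖d²H(π_θ)[u,v]‖_∞ ≤ (4 + 8·log|A|)·‖u‖_∞·‖v‖_∞; (iii) ‖d³H(π_θ)[u,v,w]‖_∞ ≤ (56 + 48·log|A|)·‖u‖_∞·‖v‖_∞·‖w‖_∞. -/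
open scoped BigOperators

/-- The softmax policy `π_θ(a|s) = exp θ(s,a) / Σ_{a'} exp θ(s,a')`. -/
noncomputable def softmax {S A : Type*} [Fintype A] (θ : S × A → ℝ) (s : S) (a : A) : ℝ :=
  Real.exp (θ (s, a)) / ∑ a' : A, Real.exp (θ (s, a'))

/-- The vector of per-state entropies `H(π_θ)(s) = -Σ_a π_θ(a|s) log π_θ(a|s)`. -/
noncomputable def entropyVec {S A : Type*} [Fintype A] (θ : S × A → ℝ) : S → ℝ :=
  fun s => -∑ a : A, softmax θ s a * Real.log (softmax θ s a)

section helpers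

variable {S A : Type*} [Fintype A]

/-- Expectation under the softmax policy. -/
noncomputable def ex (θ : S × A → ℝ) (s : S) (f : A → ℝ) : ℝ := ∑ a, softmax θ s a * f a

/-- Centered direction. -/
noncomputable def cen (u : S × A → ℝ) (s : S) (θ : S × A → ℝ) (a : A) : ℝ :=
  u (s, a) - ex θ s (fun b => u (s, b))

/-- Surprisal. -/
noncomputable def sur (s : S) (θ : S × A → ℝ) (a : A) : ℝ := - Real.log (softmax θ s a)

theorem Z_pos [Nonempty A] (θ : S × A → ℝ) (s : S) : 0 < ∑ a' : A, Real.exp (θ (s, a')) :=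
  Finset.sum_pos (fun _ _ => Real.exp_pos _) Finset.univ_nonempty

theorem softmax_pos [Nonempty A] (θ : S × A → ℝ) (s : S) (a : A) : 0 < softmax θ s a :=
  div_pos (Real.exp_pos _) (Z_pos θ s)

theorem softmax_sum [Nonempty A] (θ : S × A → ℝ) (s : S) : ∑ a, softmax θ s a = 1 := by
  unfold softmax
  rw [← Finset.sum_div, div_self (Z_pos θ s).ne']

theorem softmax_le_one [Nonempty A] (θ : S × A → ℝ) (s : S) (a : A) : softmax θ s a ≤ 1 := by
  rw [← softmax_sum θ s]
  exact Finset.single_le_sum (fun b _ => (softmax_pos θ s b).le) (Finset.mem_univ a)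

theorem sur_nonneg [Nonempty A] (θ : S × A → ℝ) (s : S) (a : A) : 0 ≤ sur s θ a := by
  unfold sur
  have := Real.log_nonpos (softmax_pos θ s a).le (softmax_le_one θ s a)
  linarith

theorem ex_sur_le [Nonempty A] (θ : S × A → ℝ) (s : S) :
    ex θ s (sur s θ) ≤ Real.log (Fintype.card A) := by
  have hn : (0 : ℝ) < Fintype.card A := by exact_mod_cast Fintype.card_pos
  have h : ∀ a, softmax θ s a * sur s θ a - softmax θ s a * Real.log (Fintype.card A)
      ≤ 1 / (Fintype.card A : ℝ) - softmax θ s a := by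
    intro a
    have hp := softmax_pos θ s a
    have h1 := Real.log_le_sub_one_of_pos (x := (softmax θ s a * Fintype.card A)⁻¹) (by positivity)
    rw [Real.log_inv, Real.log_mul hp.ne' hn.ne'] at h1
    have h2 := mul_le_mul_of_nonneg_left h1 hp.le
    have h3 : softmax θ s a * ((softmax θ s a * Fintype.card A)⁻¹ - 1)
        = 1 / (Fintype.card A : ℝ) - softmax θ s a := by field_simp
    rw [h3] at h2
    unfold sur
    linarith
  have := Finset.sum_le_sum (fun a (_ : a ∈ Finset.univ) => h a)
  rw [Finset.sum_sub_distrib, Finset.sum_sub_distrib, ← Finset.sum_mul, softmax_sum] at this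
  simp [hn.ne'] at this
  unfold ex
  linarith

theorem abs_ex_le [Nonempty A] (θ : S × A → ℝ) (s : S) (f g : A → ℝ) (h : ∀ a, |f a| ≤ g a) :
    |ex θ s f| ≤ ex θ s g := by
  unfold ex
  refine (Finset.abs_sum_le_sum_abs _ _).trans (Finset.sum_le_sum fun a _ => ?_)
  rw [abs_mul, abs_of_pos (softmax_pos θ s a)]
  exact mul_le_mul_of_nonneg_left (h a) (softmax_pos θ s a).le

theorem ex_const [Nonempty A] (θ : S × A → ℝ) (s : S) (c : ℝ) : ex θ s (fun _ => c) = c := by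
  unfold ex
  rw [← Finset.sum_mul, softmax_sum, one_mul]

theorem ex_mul_const (θ : S × A → ℝ) (s : S) (f : A → ℝ) (c : ℝ) :
    ex θ s (fun a => f a * c) = ex θ s f * c := by
  unfold ex
  rw [Finset.sum_mul]
  simp only [mul_assoc]

theorem ex_add (θ : S × A → ℝ) (s : S) (f g : A → ℝ) :
    ex θ s (fun a => f a + g a) = ex θ s f + ex θ s g := by
  unfold ex
  simp only [mul_add, Finset.sum_add_distrib]

theorem ex_neg (θ : S × A → ℝ) (s : S) (f : A → ℝ) :
    ex θ s (fun a => - f a) = - ex θ s f := by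
  unfold ex
  simp only [mul_neg, Finset.sum_neg_distrib]

theorem ex_cen [Nonempty A] (u θ : S × A → ℝ) (s : S) : ex θ s (cen u s θ) = 0 := by
  have : ex θ s (cen u s θ) = ex θ s (fun b => u (s, b)) - ex θ s (fun b => u (s, b)) := by
    conv_lhs => unfold ex cen
    simp only [mul_sub, Finset.sum_sub_distrib]
    rw [← Finset.sum_mul, softmax_sum, one_mul]
    rfl
  rw [this, sub_self]

theorem abs_cen_le [Fintype S] [Nonempty A] (u θ : S × A → ℝ) (s : S) (a : A) :
    |cen u s θ a| ≤ 2 * ‖u‖ := by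
  have h1 : ∀ b, |u (s, b)| ≤ ‖u‖ := fun b => norm_le_pi_norm u (s, b)
  have h2 := abs_ex_le θ s (fun b => u (s, b)) (fun _ => ‖u‖) h1
  rw [ex_const] at h2
  have h3 := abs_sub (u (s, a)) (ex θ s (fun b => u (s, b)))
  unfold cen
  linarith [h1 a]

/-- Expectation of a bounded function. -/
theorem abs_ex_bd [Nonempty A] (θ : S × A → ℝ) (s : S) (f : A → ℝ) (c : ℝ)
    (h : ∀ a, |f a| ≤ c) : |ex θ s f| ≤ c := by
  have := abs_ex_le θ s f (fun _ => c) h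
  rwa [ex_const] at this

/-- Expectation of surprisal times a bounded function. -/
theorem abs_ex_sur [Nonempty A] (θ : S × A → ℝ) (s : S) (f : A → ℝ) (c : ℝ) (hc : 0 ≤ c)
    (h : ∀ a, |f a| ≤ c) :
    |ex θ s (fun a => sur s θ a * f a)| ≤ Real.log (Fintype.card A) * c := by
  have := abs_ex_le θ s (fun a => sur s θ a * f a) (fun a => sur s θ a * c) (fun a => by
    rw [abs_mul, abs_of_nonneg (sur_nonneg θ s a)]
    exact mul_le_mul_of_nonneg_left (h a) (sur_nonneg θ s a))
  rw [ex_mul_const] at this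
  exact this.trans (mul_le_mul_of_nonneg_right (ex_sur_le θ s) hc)

/-! Derivatives along lines -/

theorem softmax_hd [Nonempty A] (θ v : S × A → ℝ) (s : S) (a : A) :
    HasDerivAt (fun t : ℝ => softmax (θ + t • v) s a) (softmax θ s a * cen v s θ a) 0 := by
  have h1 : ∀ b, HasDerivAt (fun t : ℝ => Real.exp ((θ + t • v) (s, b)))
      (Real.exp (θ (s, b)) * v (s, b)) 0 := by
    intro b
    have : HasDerivAt (fun t : ℝ => θ (s, b) + t * v (s, b)) (1 * v (s, b)) 0 :=
      ((hasDerivAt_id (0 : ℝ)).mul_const _).const_add _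
    simpa using this.exp
  have h2 := HasDerivAt.fun_sum (u := Finset.univ) (fun b _ => h1 b)
  have hz := Z_pos θ s
  have h3 := (h1 a).fun_div h2 (by simpa using hz.ne')
  unfold softmax
  refine h3.congr_deriv (Eq.symm ?_)
  unfold cen ex softmax
  simp only [zero_smul, add_zero, div_mul_eq_mul_div, ← Finset.sum_div]
  field_simp

theorem sur_hd [Nonempty A] (θ v : S × A → ℝ) (s : S) (a : A) :
    HasDerivAt (fun t : ℝ => sur s (θ + t • v) a) (- cen v s θ a) 0 := by
  have h := ((softmax_hd θ v s a).log (by simpa using (softmax_pos θ s a).ne')).neg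
  unfold sur
  refine h.congr_deriv (Eq.symm ?_)
  have := (softmax_pos θ s a).ne'
  simp only [zero_smul, add_zero]
  field_simp

theorem ex_hd [Nonempty A] (θ v : S × A → ℝ) (s : S) (f : (S × A → ℝ) → A → ℝ) (f' : A → ℝ)
    (hf : ∀ a, HasDerivAt (fun t : ℝ => f (θ + t • v) a) (f' a) 0) :
    HasDerivAt (fun t : ℝ => ex (θ + t • v) s (f (θ + t • v)))
      (ex θ s (fun a => f θ a * cen v s θ a + f' a)) 0 := by
  have h := HasDerivAt.fun_sum (u := Finset.univ) (fun a _ => (softmax_hd θ v s a).fun_mul (hf a))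
  unfold ex
  refine h.congr_deriv (Eq.symm ?_)
  refine Finset.sum_congr rfl fun a _ => ?_
  simp only [zero_smul, add_zero]
  ring

theorem cen_hd [Nonempty A] (θ u v : S × A → ℝ) (s : S) (a : A) :
    HasDerivAt (fun t : ℝ => cen u s (θ + t • v) a)
      (- ex θ s (fun b => cen u s θ b * cen v s θ b)) 0 := by
  have h := (ex_hd θ v s (fun _ b => u (s, b)) (fun _ => 0)
    (fun b => hasDerivAt_const _ _)).const_sub (u (s, a))
  unfold cen at h ⊢
  refine h.congr_deriv (congrArg Neg.neg (Eq.symm ?_))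
  have h1 := ex_cen v θ s
  have h2 := ex_mul_const θ s (cen v s θ) (- ex θ s (fun b => u (s, b)))
  rw [h1, zero_mul] at h2
  have h3 := ex_add θ s (fun a => cen v s θ a * (- ex θ s (fun b => u (s, b))))
    (fun a => u (s, a) * cen v s θ a)
  rw [h2, zero_add] at h3
  unfold cen at h3
  simp only [add_zero]
  rw [← h3]
  congr 1
  funext b
  ring

/-- First derivative. -/
noncomputable def G1 (u θ : S × A → ℝ) : S → ℝ :=
  fun s => ex θ s (fun a => sur s θ a * cen u s θ a)

/-- Second derivative. -/
noncomputable def G2 (u v θ : S × A → ℝ) : S → ℝ :=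
  fun s => ex θ s (fun a => sur s θ a * (cen u s θ a * cen v s θ a))
    - ex θ s (fun a => cen u s θ a * cen v s θ a) * (1 + ex θ s (sur s θ))

/-- Third derivative. -/
noncomputable def G3 (u v w θ : S × A → ℝ) : S → ℝ :=
  fun s => ex θ s (fun a => sur s θ a * (cen u s θ a * cen v s θ a * cen w s θ a))
    - ex θ s (fun a => cen u s θ a * cen v s θ a * cen w s θ a)
    - ex θ s (fun a => cen u s θ a * cen w s θ a) * G1 v θ s
    - ex θ s (fun a => cen v s θ a * cen w s θ a) * G1 u θ s
    - ex θ s (fun a => cen u s θ a * cen v s θ a * cen w s θ a) * (1 + ex θ s (sur s θ))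
    - ex θ s (fun a => cen u s θ a * cen v s θ a) * G1 w θ s

theorem entropy_eq (θ : S × A → ℝ) (s : S) : entropyVec θ s = ex θ s (sur s θ) := by
  unfold entropyVec ex sur
  simp

theorem H_hd [Nonempty A] (θ v : S × A → ℝ) (s : S) :
    HasDerivAt (fun t : ℝ => ex (θ + t • v) s (sur s (θ + t • v))) (G1 v θ s) 0 := by
  have h := ex_hd θ v s (sur s) _ (fun a => sur_hd θ v s a)
  rw [ex_add, ex_neg, ex_cen] at h
  refine h.congr_deriv ?_
  simp [G1]

theorem G1_hd [Nonempty A] (θ u v : S × A → ℝ) (s : S) :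
    HasDerivAt (fun t : ℝ => G1 u (θ + t • v) s) (G2 u v θ s) 0 := by
  have h := ex_hd θ v s (fun θ a => sur s θ a * cen u s θ a) _
    (fun a => (sur_hd θ v s a).fun_mul (cen_hd θ u v s a))
  unfold G1
  refine h.congr_deriv (Eq.symm ?_)
  simp only [zero_smul, add_zero]
  rw [ex_add, ex_add, ex_mul_const]
  unfold G2
  have e1 : ex θ s (fun a => -cen v s θ a * cen u s θ a)
      = - ex θ s (fun a => cen u s θ a * cen v s θ a) := by
    rw [← ex_neg]; congr 1; funext a; ring
  have e2 : (fun a => sur s θ a * cen u s θ a * cen v s θ a)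
      = (fun a => sur s θ a * (cen u s θ a * cen v s θ a)) := by funext a; ring
  rw [e1, e2]
  ring

theorem cov_hd [Nonempty A] (θ u v w : S × A → ℝ) (s : S) :
    HasDerivAt (fun t : ℝ => ex (θ + t • w) s
        (fun a => cen u s (θ + t • w) a * cen v s (θ + t • w) a))
      (ex θ s (fun a => cen u s θ a * cen v s θ a * cen w s θ a)) 0 := by
  have h := ex_hd θ w s (fun θ a => cen u s θ a * cen v s θ a) _
    (fun a => (cen_hd θ u w s a).fun_mul (cen_hd θ v w s a))
  refine h.congr_deriv (Eq.symm ?_)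
  simp only [zero_smul, add_zero]
  rw [ex_add, ex_add, ex_mul_const, ex_cen]
  simp only [mul_comm (-ex θ s _) (cen v s θ _)]
  rw [ex_mul_const, ex_cen]
  ring

theorem G2_hd [Nonempty A] (θ u v w : S × A → ℝ) (s : S) :
    HasDerivAt (fun t : ℝ => G2 u v (θ + t • w) s) (G3 u v w θ s) 0 := by
  have h1 := ex_hd θ w s (fun θ a => sur s θ a * (cen u s θ a * cen v s θ a)) _
    (fun a => (sur_hd θ w s a).fun_mul ((cen_hd θ u w s a).fun_mul (cen_hd θ v w s a)))
  have h := h1.fun_sub ((cov_hd θ u v w s).fun_mul ((H_hd θ w s).const_add 1))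
  unfold G2
  refine h.congr_deriv (Eq.symm ?_)
  simp only [zero_smul, add_zero]
  unfold G3
  have e1 : ∀ c d : ℝ, ex θ s (fun a => sur s θ a * (cen u s θ a * cen v s θ a) * cen w s θ a
      + (-cen w s θ a * (cen u s θ a * cen v s θ a)
        + sur s θ a * (-c * cen v s θ a + cen u s θ a * -d)))
      = ex θ s (fun a => sur s θ a * (cen u s θ a * cen v s θ a * cen w s θ a))
        - ex θ s (fun a => cen u s θ a * cen v s θ a * cen w s θ a)
        - c * G1 v θ s - d * G1 u θ s := by
    intro c d
    unfold G1 ex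
    simp only [Finset.mul_sum]
    simp only [← Finset.sum_sub_distrib]
    refine Finset.sum_congr rfl fun a _ => ?_
    ring
  rw [e1]
  ring

/-! Smoothness -/

theorem softmax_cd [Fintype S] [Nonempty A] (s : S) (a : A) :
    ContDiff ℝ ⊤ (fun θ : S × A → ℝ => softmax θ s a) := by
  unfold softmax
  refine ContDiff.div (by fun_prop) (by fun_prop) fun θ => (Z_pos θ s).ne'

theorem sur_cd [Fintype S] [Nonempty A] (s : S) (a : A) :
    ContDiff ℝ ⊤ (fun θ : S × A → ℝ => sur s θ a) := by
  unfold sur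
  exact ((softmax_cd s a).log fun θ => (softmax_pos θ s a).ne').neg

theorem ex_cd [Fintype S] [Nonempty A] (s : S) (f : (S × A → ℝ) → A → ℝ)
    (hf : ∀ a, ContDiff ℝ ⊤ (fun θ => f θ a)) :
    ContDiff ℝ ⊤ (fun θ : S × A → ℝ => ex θ s (f θ)) := by
  unfold ex
  exact ContDiff.sum fun a _ => (softmax_cd s a).mul (hf a)

theorem cen_cd [Fintype S] [Nonempty A] (u : S × A → ℝ) (s : S) (a : A) :
    ContDiff ℝ ⊤ (fun θ : S × A → ℝ => cen u s θ a) := by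
  unfold cen
  exact contDiff_const.sub (ex_cd s _ fun _ => contDiff_const)

theorem entropy_cd [Fintype S] [Nonempty A] :
    ContDiff ℝ ⊤ (entropyVec (S := S) (A := A)) := by
  rw [contDiff_pi]
  intro s
  simp only [entropy_eq]
  exact ex_cd s _ fun a => sur_cd s a

theorem G1_cd [Fintype S] [Nonempty A] (u : S × A → ℝ) : ContDiff ℝ ⊤ (G1 u) := by
  rw [contDiff_pi]
  intro s
  exact ex_cd s _ fun a => (sur_cd s a).mul (cen_cd u s a)

theorem G2_cd [Fintype S] [Nonempty A] (u v : S × A → ℝ) : ContDiff ℝ ⊤ (G2 u v) := by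
  rw [contDiff_pi]
  intro s
  exact (ex_cd s _ fun a => (sur_cd s a).mul ((cen_cd u s a).mul (cen_cd v s a))).sub
    ((ex_cd s _ fun a => (cen_cd u s a).mul (cen_cd v s a)).mul
      (contDiff_const.add (ex_cd s _ fun a => sur_cd s a)))

theorem fderiv_of_line [Fintype S] (F : (S × A → ℝ) → S → ℝ) (hF : ContDiff ℝ ⊤ F)
    (θ v : S × A → ℝ) (F' : S → ℝ)
    (h : ∀ s, HasDerivAt (fun t : ℝ => F (θ + t • v) s) (F' s) 0) : fderiv ℝ F θ v = F' := by
  have h1 : HasLineDerivAt ℝ F F' θ v := hasDerivAt_pi.2 h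
  rw [← (hF.differentiable (by simp) θ).lineDeriv_eq_fderiv]
  exact h1.lineDeriv

theorem iter_succ [Fintype S] (F : (S × A → ℝ) → S → ℝ) (hF : ContDiff ℝ ⊤ F) (n : ℕ)
    (θ v : S × A → ℝ) (m : Fin n → (S × A → ℝ)) :
    iteratedFDeriv ℝ (n + 1) F θ (Matrix.vecCons v m)
      = fderiv ℝ (fun x => iteratedFDeriv ℝ n F x m) θ v := by
  have hd : DifferentiableAt ℝ (iteratedFDeriv ℝ n F) θ :=
    (hF.differentiable_iteratedFDeriv (m := n) (by exact_mod_cast WithTop.coe_lt_top _)) θ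
  rw [iteratedFDeriv_succ_apply_left]
  have h2 := ((ContinuousMultilinearMap.apply ℝ (fun _ : Fin n => (S × A → ℝ)) (S → ℝ) m).hasFDerivAt.comp
    θ hd.hasFDerivAt).fderiv
  have h3 : (fun x => iteratedFDeriv ℝ n F x m) =
    (ContinuousMultilinearMap.apply ℝ (fun _ : Fin n => (S × A → ℝ)) (S → ℝ) m) ∘
      (iteratedFDeriv ℝ n F) := rfl
  rw [h3, h2]
  rfl

theorem iter1 [Fintype S] [Nonempty A] (θ u : S × A → ℝ) :
    iteratedFDeriv ℝ 1 (entropyVec (S := S) (A := A)) θ ![u] = G1 u θ := by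
  rw [iter_succ _ entropy_cd]
  simp only [iteratedFDeriv_zero_apply]
  refine fderiv_of_line _ entropy_cd _ _ _ fun s => ?_
  simp only [entropy_eq]
  exact H_hd θ u s

theorem iter2 [Fintype S] [Nonempty A] (θ u v : S × A → ℝ) :
    iteratedFDeriv ℝ 2 (entropyVec (S := S) (A := A)) θ ![u, v] = G2 v u θ := by
  rw [iter_succ _ entropy_cd]
  simp only [iter1]
  exact fderiv_of_line _ (G1_cd v) _ _ _ fun s => G1_hd θ v u s

theorem iter3 [Fintype S] [Nonempty A] (θ u v w : S × A → ℝ) :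
    iteratedFDeriv ℝ 3 (entropyVec (S := S) (A := A)) θ ![u, v, w] = G3 w v u θ := by
  rw [iter_succ _ entropy_cd]
  simp only [iter2]
  exact fderiv_of_line _ (G2_cd w v) _ _ _ fun s => G2_hd θ w v u s

theorem abs_cen2_le [Fintype S] [Nonempty A] (u v θ : S × A → ℝ) (s : S) (a : A) :
    |cen u s θ a * cen v s θ a| ≤ 4 * (‖u‖ * ‖v‖) := by
  rw [abs_mul]
  have := mul_le_mul (abs_cen_le u θ s a) (abs_cen_le v θ s a) (abs_nonneg _) (by positivity)
  linarith

theorem abs_cen3_le [Fintype S] [Nonempty A] (u v w θ : S × A → ℝ) (s : S) (a : A) :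
    |cen u s θ a * cen v s θ a * cen w s θ a| ≤ 8 * (‖u‖ * ‖v‖ * ‖w‖) := by
  rw [abs_mul]
  have := mul_le_mul (abs_cen2_le u v θ s a) (abs_cen_le w θ s a) (abs_nonneg _) (by positivity)
  linarith

theorem log_card_nonneg [Nonempty A] : 0 ≤ Real.log (Fintype.card A) :=
  Real.log_natCast_nonneg _

theorem abs_H1 [Nonempty A] (θ : S × A → ℝ) (s : S) :
    |1 + ex θ s (sur s θ)| ≤ 1 + Real.log (Fintype.card A) := by
  have h0 : 0 ≤ ex θ s (sur s θ) :=
    Finset.sum_nonneg fun a _ => mul_nonneg (softmax_pos θ s a).le (sur_nonneg θ s a)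
  rw [abs_of_nonneg (by linarith)]
  linarith [ex_sur_le θ s]

theorem G1_bd [Fintype S] [Nonempty A] (u θ : S × A → ℝ) (s : S) :
    |G1 u θ s| ≤ Real.log (Fintype.card A) * (2 * ‖u‖) :=
  abs_ex_sur θ s _ _ (by positivity) (abs_cen_le u θ s)

theorem G2_bd [Fintype S] [Nonempty A] (u v θ : S × A → ℝ) (s : S) :
    |G2 u v θ s| ≤ (4 + 8 * Real.log (Fintype.card A)) * (‖u‖ * ‖v‖) := by
  have h1 := abs_ex_sur θ s _ _ (by positivity) (abs_cen2_le u v θ s)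
  have h2 := mul_le_mul (abs_ex_bd θ s _ _ (abs_cen2_le u v θ s)) (abs_H1 θ s) (abs_nonneg _)
    (by positivity)
  rw [← abs_mul] at h2
  unfold G2
  refine (abs_sub _ _).trans ((add_le_add h1 h2).trans (le_of_eq ?_))
  ring

theorem G3_bd [Fintype S] [Nonempty A] (u v w θ : S × A → ℝ) (s : S) :
    |G3 u v w θ s| ≤ (16 + 40 * Real.log (Fintype.card A)) * (‖u‖ * ‖v‖ * ‖w‖) := by
  have h1 := abs_ex_sur θ s _ _ (by positivity) (abs_cen3_le u v w θ s)
  have h2 := abs_ex_bd θ s _ _ (abs_cen3_le u v w θ s)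
  have key : ∀ x y z : S × A → ℝ,
      |ex θ s (fun a => cen x s θ a * cen y s θ a) * G1 z θ s| ≤
        4 * (‖x‖ * ‖y‖) * (Real.log (Fintype.card A) * (2 * ‖z‖)) := by
    intro x y z
    rw [abs_mul]
    exact mul_le_mul (abs_ex_bd θ s _ _ (abs_cen2_le x y θ s)) (G1_bd z θ s) (abs_nonneg _)
      (by positivity)
  have h3 := key u w v
  have h4 := key v w u
  have h6 := key u v w
  have h5 := mul_le_mul h2 (abs_H1 θ s) (abs_nonneg _) (by positivity)
  rw [← abs_mul] at h5
  unfold G3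
  refine (abs_sub _ _).trans ((add_le_add ((abs_sub _ _).trans (add_le_add ((abs_sub _ _).trans
    (add_le_add ((abs_sub _ _).trans (add_le_add ((abs_sub _ _).trans (add_le_add h1 h2)) h3))
      h4)) h5)) h6).trans (le_of_eq ?_))
  ring

end helpers

/-- Bounds on the first three directional derivatives of `θ ↦ H(π_θ)`.
Sup norms `‖·‖_∞` are the Pi-type norms on `S × A → ℝ` and `S → ℝ`. -/
theorem stmt6 {S A : Type*} [Fintype S] [Fintype A] [Nonempty S] [Nonempty A]
    (θ u v w : S × A → ℝ) :
    ‖iteratedFDeriv ℝ 1 (entropyVec (S := S) (A := A)) θ ![u]‖ ≤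
      2 * Real.log (Fintype.card A) * ‖u‖ ∧
    ‖iteratedFDeriv ℝ 2 (entropyVec (S := S) (A := A)) θ ![u, v]‖ ≤
      (4 + 8 * Real.log (Fintype.card A)) * ‖u‖ * ‖v‖ ∧
    ‖iteratedFDeriv ℝ 3 (entropyVec (S := S) (A := A)) θ ![u, v, w]‖ ≤
      (56 + 48 * Real.log (Fintype.card A)) * ‖u‖ * ‖v‖ * ‖w‖ := by
  have hL : 0 ≤ Real.log (Fintype.card A) := log_card_nonneg
  rw [iter1, iter2, iter3]
  refine ⟨(pi_norm_le_iff_of_nonneg (by positivity)).2 fun s => ?_,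
    (pi_norm_le_iff_of_nonneg (by positivity)).2 fun s => ?_,
    (pi_norm_le_iff_of_nonneg (by positivity)).2 fun s => ?_⟩
  · rw [Real.norm_eq_abs]
    linarith [G1_bd u θ s]
  · rw [Real.norm_eq_abs]
    refine (G2_bd v u θ s).trans (le_of_eq ?_)
    ring
  · rw [Real.norm_eq_abs]
    refine (G3_bd w v u θ s).trans ?_
    have h : 0 ≤ ‖u‖ * ‖v‖ * ‖w‖ := by positivity
    nlinarith [mul_nonneg hL h]
end

section
/- Let S and A be nonempty finite sets, T ≥ 1, B ≥ 1, γ ∈ [0,1), P a transition kernel on S×A, ρ a probability distribution on S, and r : S×A → [0,1]. For θ ∈ ℝ^{S×A}, consider the unregularized (λ = 0) single-trajectory REINFORCE vector u_θ and batch estimator ĝ_θ, and let Ē(θ) = Σ_{z∈(S×A)^T} ν(θ;z)·u_θ(z). Then for every θ, Σ_{z∈((S×A)^T)^B} ( ∏_{b=1}^B ν(θ; z_b) )·‖ĝ_θ(z) − Ē(θ)‖₂⁴ ≤ 1120 / ( B²·(1−γ)⁸ ). -/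
open scoped BigOperators

/-- The score vector `∇ log π_θ(a|s) ∈ ℝ^{S×A}`. -/
noncomputable def score {S A : Type*} [Fintype A] [DecidableEq S] [DecidableEq A]
    (θ : S × A → ℝ) (s : S) (a : A) : S × A → ℝ :=
  fun p => if p.1 = s then (if p.2 = a then (1 : ℝ) else 0) - softmax θ p.1 p.2 else 0

/-- The truncated-trajectory distribution
`ν(θ; z) = ρ(s⁰) π_θ(a⁰|s⁰) ∏_{t=1}^{T-1} P(s^t|s^{t-1},a^{t-1}) π_θ(a^t|s^t)`. -/
noncomputable def trajDist {S A : Type*} [Fintype A] {T : ℕ}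
    (P : S → A → S → ℝ) (ρ : S → ℝ) (θ : S × A → ℝ) (z : Fin T → S × A) : ℝ :=
  ∏ t : Fin T,
    (if (t : ℕ) = 0 then ρ (z t).1
      else
        P (z ⟨(t : ℕ) - 1, lt_of_le_of_lt (Nat.sub_le _ _) t.isLt⟩).1
          (z ⟨(t : ℕ) - 1, lt_of_le_of_lt (Nat.sub_le _ _) t.isLt⟩).2 (z t).1) *
      softmax θ (z t).1 (z t).2

/-- The single-trajectory (entropy-regularized) REINFORCE vector
`u_θ(z) = Σ_{t<T} γ^t (Σ_{ℓ≤t} ∇log π_θ(a^ℓ|s^ℓ)) (r(s^t,a^t) - λ log π_θ(a^t|s^t))`. -/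
noncomputable def reinforce {S A : Type*} [Fintype S] [Fintype A] [DecidableEq S]
    [DecidableEq A] {T : ℕ} (γ lam : ℝ) (r : S → A → ℝ) (θ : S × A → ℝ)
    (z : Fin T → S × A) : S × A → ℝ :=
  ∑ t : Fin T,
    (γ ^ (t : ℕ) * (r (z t).1 (z t).2 - lam * Real.log (softmax θ (z t).1 (z t).2))) •
      ∑ l : Fin T, if (l : ℕ) ≤ (t : ℕ) then score θ (z l).1 (z l).2 else 0

/-- The batch REINFORCE estimator `ĝ_θ(z) = (1/B) Σ_b u_θ(z_b)`. -/
noncomputable def batchEstimator {S A : Type*} [Fintype S] [Fintype A] [DecidableEq S]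
    [DecidableEq A] {T B : ℕ} (γ lam : ℝ) (r : S → A → ℝ) (θ : S × A → ℝ)
    (z : Fin B → Fin T → S × A) : S × A → ℝ :=
  (1 / (B : ℝ)) • ∑ b, reinforce γ lam r θ (z b)

/-- The Euclidean norm on `ι → ℝ`. -/
noncomputable def eucNorm {ι : Type*} [Fintype ι] (u : ι → ℝ) : ℝ :=
  Real.sqrt (∑ i, u i ^ 2)

section Helpers

theorem aux_sum_cons {Ω M : Type*} [Fintype Ω] [AddCommMonoid M] (n : ℕ)
    (f : (Fin (n + 1) → Ω) → M) :
    ∑ z, f z = ∑ z : Fin n → Ω, ∑ x : Ω, f (Fin.cons x z) := by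
  rw [← (Fin.consEquiv (fun _ : Fin (n + 1) => Ω)).sum_comp, Fintype.sum_prod_type_right]
  rfl

theorem aux_sum_snoc {Ω M : Type*} [Fintype Ω] [AddCommMonoid M] (n : ℕ)
    (f : (Fin (n + 1) → Ω) → M) :
    ∑ z, f z = ∑ z : Fin n → Ω, ∑ x : Ω, f (Fin.snoc (α := fun _ => Ω) z x) := by
  rw [← (Fin.snocEquiv (fun _ : Fin (n + 1) => Ω)).sum_comp, Fintype.sum_prod_type_right]
  rfl

theorem aux_prod_one {Ω : Type*} [Fintype Ω] (w : Ω → ℝ) (hw : ∑ x, w x = 1) (n : ℕ) :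
    ∑ z : Fin n → Ω, ∏ i, w (z i) = 1 := by
  induction n with
  | zero => simp
  | succ n ih =>
    rw [aux_sum_cons]
    simp only [Fin.prod_univ_succ, Fin.cons_zero, Fin.cons_succ, ← Finset.sum_mul, hw, one_mul, ih]

theorem aux_moments {Ω E : Type*} [Fintype Ω] [NormedAddCommGroup E] [InnerProductSpace ℝ E]
    (w : Ω → ℝ) (hw0 : ∀ x, 0 ≤ w x) (hw : ∑ x, w x = 1) (X : Ω → E)
    (hX : ∑ x, w x • X x = 0) (c : ℝ) (hc : ∀ x, ‖X x‖ ^ 2 ≤ c) (n : ℕ) :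
    (∑ z : Fin n → Ω, (∏ i, w (z i)) • ∑ i, X (z i) = 0) ∧
    (∑ z : Fin n → Ω, (∏ i, w (z i)) * ‖∑ i, X (z i)‖ ^ 2 ≤ n * c) ∧
    (∑ z : Fin n → Ω, (∏ i, w (z i)) * ‖∑ i, X (z i)‖ ^ 4 ≤ 3 * n ^ 2 * c ^ 2) := by
  have hin : ∀ v : E, ∑ x, w x * inner ℝ v (X x) = 0 := by
    intro v
    have := congrArg (fun y => inner ℝ v y) hX
    simpa [inner_sum, inner_smul_right] using this
  induction n with
  | zero => simp
  | succ n ih =>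
    obtain ⟨h1, h2, h4⟩ := ih
    have hone := aux_prod_one w hw n
    have hW0 : ∀ z : Fin n → Ω, 0 ≤ ∏ i, w (z i) :=
      fun z => Finset.prod_nonneg fun i _ => hw0 _
    simp only [aux_sum_cons, Fin.prod_univ_succ, Fin.sum_univ_succ, Fin.cons_zero, Fin.cons_succ]
    refine ⟨?_, ?_, ?_⟩
    · have : ∀ z : Fin n → Ω, ∑ x, (w x * ∏ i, w (z i)) • (X x + ∑ i, X (z i))
          = (∏ i, w (z i)) • ∑ i, X (z i) := by
        intro z
        have e : ∀ x, (w x * ∏ i, w (z i)) • (X x + ∑ i, X (z i))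
          = (∏ i, w (z i)) • (w x • X x) + w x • ((∏ i, w (z i)) • ∑ i, X (z i)) := by
          intro x
          rw [smul_add, mul_smul, mul_smul, smul_comm]
        simp only [e, Finset.sum_add_distrib, ← Finset.smul_sum, ← Finset.sum_smul, hX, hw]
        simp
      simp only [this, h1]
    · have : ∀ z : Fin n → Ω, ∑ x, (w x * ∏ i, w (z i)) * ‖X x + ∑ i, X (z i)‖ ^ 2
          ≤ (∏ i, w (z i)) * ‖∑ i, X (z i)‖ ^ 2 + (∏ i, w (z i)) * c := by
        intro z
        set W := ∏ i, w (z i)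
        set s := ∑ i, X (z i)
        have e : ∀ x, (w x * W) * ‖X x + s‖ ^ 2
          ≤ w x * (W * ‖s‖ ^ 2 + W * c) + (2 * W) * (w x * inner ℝ s (X x)) := by
          intro x
          rw [norm_add_sq_real, real_inner_comm]
          have := mul_le_mul_of_nonneg_left (hc x) (mul_nonneg (hw0 x) (hW0 z))
          linarith
        refine (Finset.sum_le_sum fun x _ => e x).trans ?_
        rw [Finset.sum_add_distrib, ← Finset.sum_mul, ← Finset.mul_sum, hin, hw]
        simp
      refine (Finset.sum_le_sum fun z _ => this z).trans ?_
      rw [Finset.sum_add_distrib, ← Finset.sum_mul, hone]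
      push_cast
      linarith
    · have : ∀ z : Fin n → Ω, ∑ x, (w x * ∏ i, w (z i)) * ‖X x + ∑ i, X (z i)‖ ^ 4
          ≤ (∏ i, w (z i)) * ‖∑ i, X (z i)‖ ^ 4 + (6 * c) * ((∏ i, w (z i)) * ‖∑ i, X (z i)‖ ^ 2)
            + (∏ i, w (z i)) * c ^ 2
            + 4 * inner ℝ (∑ x, (w x * ‖X x‖ ^ 2) • X x) ((∏ i, w (z i)) • ∑ i, X (z i)) := by
        intro z
        have hWz := hW0 z
        generalize (∏ i, w (z i)) = W at *
        generalize (∑ i, X (z i)) = s at *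
        have e : ∀ x, (w x * W) * ‖X x + s‖ ^ 4
          ≤ w x * (W * ‖s‖ ^ 4 + (6 * c) * (W * ‖s‖ ^ 2) + W * c ^ 2)
            + (4 * W * ‖s‖ ^ 2) * (w x * inner ℝ s (X x))
            + 4 * inner ℝ ((w x * ‖X x‖ ^ 2) • X x) (W • s) := by
          intro x
          have e4 : ‖X x + s‖ ^ 4 = (‖X x + s‖ ^ 2) ^ 2 := by ring
          rw [e4, norm_add_sq_real, real_inner_comm (X x) s, real_inner_smul_left,
            real_inner_smul_right]
          have hcs : (inner ℝ (X x) s) ^ 2 ≤ ‖X x‖ ^ 2 * ‖s‖ ^ 2 := by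
            rw [← mul_pow]
            exact sq_le_sq' (by linarith [neg_le_of_abs_le (abs_real_inner_le_norm (X x) s)])
              (real_inner_le_norm _ _)
          have hx := hc x
          have hp : 0 ≤ ‖X x‖ ^ 2 := by positivity
          have hq : 0 ≤ ‖s‖ ^ 2 := by positivity
          have e5 : ‖s‖ ^ 4 = (‖s‖ ^ 2) ^ 2 := by ring
          rw [e5]
          generalize inner ℝ (X x) s = t at *
          generalize ‖X x‖ ^ 2 = p at *
          generalize ‖s‖ ^ 2 = q at *
          have key : (p + 2 * t + q) ^ 2 ≤ q ^ 2 + 6 * c * q + c ^ 2 + 4 * q * t + 4 * p * t := by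
            nlinarith [mul_le_mul_of_nonneg_right hx hq, mul_self_le_mul_self hp hx]
          have := mul_le_mul_of_nonneg_left key (mul_nonneg (hw0 x) hWz)
          linarith
        refine (Finset.sum_le_sum fun x _ => e x).trans ?_
        rw [Finset.sum_add_distrib, Finset.sum_add_distrib, ← Finset.sum_mul, ← Finset.mul_sum, hin,
          hw, sum_inner, ← Finset.mul_sum]
        simp
      refine (Finset.sum_le_sum fun z _ => this z).trans ?_
      rw [Finset.sum_add_distrib, Finset.sum_add_distrib, Finset.sum_add_distrib, ← Finset.sum_mul,
        ← Finset.mul_sum, ← Finset.mul_sum, ← inner_sum, hone, h1, inner_zero_right]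
      have hc0 : 0 ≤ c := by
        have : (Finset.univ : Finset Ω).Nonempty := by
          by_contra h
          rw [Finset.not_nonempty_iff_eq_empty] at h
          simp [h] at hw
        obtain ⟨x, -⟩ := this
        exact (sq_nonneg _).trans (hc x)
      push_cast
      nlinarith [mul_le_mul_of_nonneg_left h2 hc0, sq_nonneg c]

theorem aux_softmax_nonneg {S A : Type*} [Fintype A] (θ : S × A → ℝ) (s : S) (a : A) :
    0 ≤ softmax θ s a := by
  unfold softmax
  positivity

theorem aux_softmax_sum {S A : Type*} [Fintype A] [Nonempty A] (θ : S × A → ℝ) (s : S) :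
    ∑ a, softmax θ s a = 1 := by
  unfold softmax
  rw [← Finset.sum_div]
  exact div_self (Finset.sum_pos (fun a _ => Real.exp_pos _) Finset.univ_nonempty).ne'

theorem aux_softmax_le {S A : Type*} [Fintype A] [Nonempty A] (θ : S × A → ℝ) (s : S) (a : A) :
    softmax θ s a ≤ 1 := by
  rw [← aux_softmax_sum θ s]
  exact Finset.single_le_sum (f := fun a => softmax θ s a)
    (fun a _ => aux_softmax_nonneg θ s a) (Finset.mem_univ a)

theorem aux_score {S A : Type*} [Fintype S] [Fintype A] [Nonempty A] [DecidableEq S]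
    [DecidableEq A] (θ : S × A → ℝ) (s : S) (a : A) :
    ∑ p, score θ s a p ^ 2 ≤ 2 := by
  have e : ∀ p : S × A, score θ s a p ^ 2 ≤
      if p.1 = s then ((if p.2 = a then (1 : ℝ) else 0) + softmax θ p.1 p.2) else 0 := by
    intro p
    unfold score
    have h0 := aux_softmax_nonneg θ p.1 p.2
    have h1 := aux_softmax_le θ p.1 p.2
    split_ifs <;> nlinarith
  refine (Finset.sum_le_sum fun p _ => e p).trans ?_
  rw [Fintype.sum_prod_type_right]
  simp [Finset.sum_add_distrib, aux_softmax_sum]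
  norm_num

theorem aux_traj_nonneg {S A : Type*} [Fintype A] {T : ℕ}
    (P : S → A → S → ℝ) (hP : ∀ s a s', 0 ≤ P s a s')
    (ρ : S → ℝ) (hρ0 : ∀ s, 0 ≤ ρ s) (θ : S × A → ℝ) (z : Fin T → S × A) :
    0 ≤ trajDist P ρ θ z := by
  unfold trajDist
  refine Finset.prod_nonneg fun t _ => mul_nonneg ?_ (aux_softmax_nonneg _ _ _)
  split_ifs
  · exact hρ0 _
  · exact hP _ _ _

theorem aux_traj_sum {S A : Type*} [Fintype S] [Fintype A] [Nonempty A] (T : ℕ)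
    (P : S → A → S → ℝ) (hP : ∀ s a, ∑ s', P s a s' = 1)
    (ρ : S → ℝ) (hρ1 : ∑ s, ρ s = 1) (θ : S × A → ℝ) :
    ∑ z : Fin T → S × A, trajDist P ρ θ z = 1 := by
  induction T with
  | zero => simp [trajDist]
  | succ T ih =>
    rw [aux_sum_snoc, ← ih]
    refine Finset.sum_congr rfl fun z _ => ?_
    have e : ∀ x : S × A, trajDist P ρ θ (Fin.snoc (α := fun _ => S × A) z x) =
        trajDist P ρ θ z * ((if h : T = 0 then ρ x.1 else
          P (z ⟨T - 1, by omega⟩).1 (z ⟨T - 1, by omega⟩).2 x.1) * softmax θ x.1 x.2) := by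
      intro x
      unfold trajDist
      rw [Fin.prod_univ_castSucc]
      congr 1
      · refine Finset.prod_congr rfl fun t _ => ?_
        have ht : (t : ℕ) - 1 < T := by omega
        simp only [Fin.snoc_castSucc, Fin.val_castSucc]
        simp [Fin.snoc, ht]
      · by_cases h : T = 0
        · simp [Fin.snoc_last, h]
        · have ht : T - 1 < T := by omega
          simp only [Fin.snoc_last, Fin.val_last, h, if_false, dif_neg, not_false_eq_true]
          simp [Fin.snoc, ht]
    simp only [e, ← Finset.mul_sum]
    rw [Fintype.sum_prod_type]
    simp only [← Finset.mul_sum, aux_softmax_sum, mul_one]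
    by_cases h : T = 0
    · simp [h, hρ1]
    · simp [h, hP]

theorem aux_geom (γ : ℝ) (hγ0 : 0 ≤ γ) (hγ1 : γ < 1) (T : ℕ) :
    ∑ t : Fin T, γ ^ (t : ℕ) * ((t : ℕ) + 1 : ℝ) ≤ 1 / (1 - γ) ^ 2 := by
  have h : ∀ T : ℕ, (∑ t : Fin T, γ ^ (t : ℕ) * ((t : ℕ) + 1 : ℝ)) * (1 - γ) ^ 2
      = 1 - γ ^ T * (1 + T * (1 - γ)) := by
    intro T
    induction T with
    | zero => simp
    | succ n ih =>
      rw [Fin.sum_univ_castSucc, add_mul]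
      simp only [Fin.val_castSucc, Fin.val_last]
      rw [ih]
      push_cast
      ring
  have h1 : 0 < 1 - γ := by linarith
  rw [le_div_iff₀ (by positivity), h]
  have : 0 ≤ γ ^ T * (1 + T * (1 - γ)) := by positivity
  linarith

theorem aux_eucNorm {ι : Type*} [Fintype ι] (u : ι → ℝ) :
    eucNorm u = ‖(WithLp.toLp 2 u : EuclideanSpace ℝ ι)‖ := by
  rw [EuclideanSpace.norm_eq]
  simp [eucNorm]

theorem aux_reinforce {S A : Type*} [Fintype S] [Fintype A] [Nonempty A] [DecidableEq S]
    [DecidableEq A] {T : ℕ} (γ : ℝ) (hγ0 : 0 ≤ γ) (hγ1 : γ < 1) (r : S → A → ℝ)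
    (hr : ∀ s a, 0 ≤ r s a ∧ r s a ≤ 1) (θ : S × A → ℝ) (z : Fin T → S × A) :
    ‖(WithLp.toLp 2 (reinforce γ 0 r θ z) : EuclideanSpace ℝ (S × A))‖
      ≤ Real.sqrt 2 * (1 / (1 - γ) ^ 2) := by
  have hs : ∀ s a, ‖(WithLp.toLp 2 (score θ s a) : EuclideanSpace ℝ (S × A))‖ ≤ Real.sqrt 2 := by
    intro s a
    rw [← aux_eucNorm]
    exact Real.sqrt_le_sqrt (aux_score θ s a)
  unfold reinforce
  rw [WithLp.toLp_sum]
  refine (norm_sum_le _ _).trans ?_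
  refine le_trans ?_ (mul_le_mul_of_nonneg_left (aux_geom γ hγ0 hγ1 T) (Real.sqrt_nonneg 2))
  rw [Finset.mul_sum]
  refine Finset.sum_le_sum fun t _ => ?_
  rw [WithLp.toLp_smul, norm_smul, WithLp.toLp_sum]
  have h1 : ‖γ ^ (t : ℕ) * (r (z t).1 (z t).2 - 0 * Real.log (softmax θ (z t).1 (z t).2))‖
      ≤ γ ^ (t : ℕ) := by
    have h := hr (z t).1 (z t).2
    rw [zero_mul, sub_zero, Real.norm_of_nonneg (mul_nonneg (pow_nonneg hγ0 _) h.1)]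
    exact mul_le_of_le_one_right (pow_nonneg hγ0 _) h.2
  have h2 : ‖∑ l : Fin T, (WithLp.toLp 2 (if (l : ℕ) ≤ (t : ℕ) then score θ (z l).1 (z l).2 else 0)
      : EuclideanSpace ℝ (S × A))‖ ≤ ((t : ℕ) + 1 : ℝ) * Real.sqrt 2 := by
    refine (norm_sum_le _ _).trans ?_
    have e : ∀ l : Fin T, ‖(WithLp.toLp 2 (if (l : ℕ) ≤ (t : ℕ) then score θ (z l).1 (z l).2 else 0)
      : EuclideanSpace ℝ (S × A))‖ ≤ if l ≤ t then Real.sqrt 2 else 0 := by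
      intro l
      by_cases h : l ≤ t
      · have h' : (l : ℕ) ≤ (t : ℕ) := h
        rw [if_pos h, if_pos h']
        exact hs _ _
      · have h' : ¬ (l : ℕ) ≤ (t : ℕ) := h
        rw [if_neg h, if_neg h']
        simp
    refine (Finset.sum_le_sum fun l _ => e l).trans ?_
    rw [← Finset.sum_filter, Finset.sum_const, nsmul_eq_mul]
    have hcard : (Finset.univ.filter fun l : Fin T => l ≤ t) = Finset.Iic t := by
      ext; simp
    rw [hcard, Fin.card_Iic]
    push_cast
    exact le_rfl
  refine (mul_le_mul h1 h2 (norm_nonneg _) (pow_nonneg hγ0 _)).trans (le_of_eq ?_)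
  ring

end Helpers

/-- Fourth central moment bound for the unregularized (`λ = 0`) batch
REINFORCE estimator under the truncated-trajectory distribution. -/
theorem stmt11 {S A : Type*} [Fintype S] [Fintype A] [Nonempty S] [Nonempty A]
    [DecidableEq S] [DecidableEq A]
    (T B : ℕ) (hT : 1 ≤ T) (hB : 1 ≤ B)
    (γ : ℝ) (hγ0 : 0 ≤ γ) (hγ1 : γ < 1)
    (P : S → A → S → ℝ) (hP : ∀ s a, (∀ s', 0 ≤ P s a s') ∧ ∑ s', P s a s' = 1)
    (ρ : S → ℝ) (hρ0 : ∀ s, 0 ≤ ρ s) (hρ1 : ∑ s, ρ s = 1)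
    (r : S → A → ℝ) (hr : ∀ s a, 0 ≤ r s a ∧ r s a ≤ 1)
    (θ : S × A → ℝ) :
    ∑ z : Fin B → Fin T → S × A,
        (∏ b, trajDist P ρ θ (z b)) *
          (eucNorm (batchEstimator γ 0 r θ z -
            ∑ z' : Fin T → S × A, trajDist P ρ θ z' • reinforce γ 0 r θ z')) ^ 4
      ≤ 1120 / ((B : ℝ) ^ 2 * (1 - γ) ^ 8) := by
  set w : (Fin T → S × A) → ℝ := fun z => trajDist P ρ θ z with hwdef
  have hw0 : ∀ z, 0 ≤ w z := aux_traj_nonneg P (fun s a => (hP s a).1) ρ hρ0 θ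
  have hw1 : ∑ z, w z = 1 := aux_traj_sum T P (fun s a => (hP s a).2) ρ hρ1 θ
  set u : (Fin T → S × A) → EuclideanSpace ℝ (S × A) :=
    fun z => WithLp.toLp 2 (reinforce γ 0 r θ z) with hu
  set m : EuclideanSpace ℝ (S × A) := ∑ z, w z • u z with hm
  set K : ℝ := Real.sqrt 2 * (1 / (1 - γ) ^ 2) with hK
  have hub : ∀ z, ‖u z‖ ≤ K := aux_reinforce γ hγ0 hγ1 r hr θ
  have hmb : ‖m‖ ≤ K := by
    refine (norm_sum_le _ _).trans ?_
    calc ∑ z, ‖w z • u z‖ ≤ ∑ z, w z * K := by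
          refine Finset.sum_le_sum fun z _ => ?_
          rw [norm_smul, Real.norm_of_nonneg (hw0 z)]
          exact mul_le_mul_of_nonneg_left (hub z) (hw0 z)
      _ = K := by rw [← Finset.sum_mul, hw1, one_mul]
  have hX0 : ∑ z, w z • (u z - m) = 0 := by
    simp only [smul_sub, Finset.sum_sub_distrib, ← Finset.sum_smul, hw1, one_smul]
    rw [← hm, sub_self]
  have hXc : ∀ z, ‖u z - m‖ ^ 2 ≤ (2 * K) ^ 2 := by
    intro z
    refine pow_le_pow_left₀ (norm_nonneg _) ?_ 2
    linarith [norm_sub_le (u z) m, hub z]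
  have main := (aux_moments w hw0 hw1 (fun z => u z - m) hX0 _ hXc B).2.2
  have hB0 : (0 : ℝ) < B := by exact_mod_cast hB
  have e : ∀ z : Fin B → Fin T → S × A,
      (∏ b, trajDist P ρ θ (z b)) * (eucNorm (batchEstimator γ 0 r θ z -
            ∑ z' : Fin T → S × A, trajDist P ρ θ z' • reinforce γ 0 r θ z')) ^ 4
      = (1 / (B : ℝ) ^ 4) * ((∏ i, w (z i)) * ‖∑ i, (u (z i) - m)‖ ^ 4) := by
    intro z
    have e1 : (WithLp.toLp 2 (batchEstimator γ 0 r θ z -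
            ∑ z' : Fin T → S × A, trajDist P ρ θ z' • reinforce γ 0 r θ z')
            : EuclideanSpace ℝ (S × A)) = (1 / (B : ℝ)) • ∑ i, (u (z i) - m) := by
      have e2 : (WithLp.toLp 2 (∑ z' : Fin T → S × A, trajDist P ρ θ z' • reinforce γ 0 r θ z')
            : EuclideanSpace ℝ (S × A)) = m := by
        rw [WithLp.toLp_sum]
        rfl
      rw [WithLp.toLp_sub, e2, batchEstimator, WithLp.toLp_smul, WithLp.toLp_sum,
        Finset.sum_sub_distrib, smul_sub]
      congr 1
      rw [Finset.sum_const, Finset.card_univ, Fintype.card_fin, ← Nat.cast_smul_eq_nsmul ℝ,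
        smul_smul, one_div, inv_mul_cancel₀ hB0.ne', one_smul]
    rw [aux_eucNorm, e1, norm_smul, Real.norm_of_nonneg (by positivity)]
    ring
  rw [Finset.sum_congr rfl fun z _ => e z, ← Finset.mul_sum]
  refine (mul_le_mul_of_nonneg_left main (by positivity)).trans ?_
  have h1 : 0 < 1 - γ := by linarith
  have hK2 : K ^ 2 = 2 / (1 - γ) ^ 4 := by
    rw [hK, mul_pow, Real.sq_sqrt (by norm_num), div_pow, ← pow_mul]
    ring
  have e3 : 1 / (B : ℝ) ^ 4 * (3 * (B : ℝ) ^ 2 * ((2 * K) ^ 2) ^ 2)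
      = 192 / ((B : ℝ) ^ 2 * (1 - γ) ^ 8) := by
    rw [mul_pow, hK2]
    field_simp
    norm_num
  rw [e3]
  gcongr
  norm_num
end
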